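/- If S and T are bounded operators on a Hilbert space such that both ST and TS are trace class, then Tr(ST) = Tr(TS); in particular the trace of the commutator [S,T] = ST - TS vanishes. -/

import Mathlib

open scoped InnerProductSpace

/-- Trace class (formulated via absolute summability of diagonal matrix
entries in every Hilbert basis). -/
def IsTraceClass {H : Type*} [NormedAddCommGroup H] [InnerProductSpace ℂ H]
    (A : H →L[ℂ] H) : Prop :=
  ∀ (ι : Type) (b : HilbertBasis ι ℂ H),
    Summable (fun i => ‖⟪A (b i), b i⟫_ℂ‖)

/-!
A trace class operator `A` is nuclear, `A = ∑ₖ |yₖ⟩⟨xₖ|` with `∑ₖ ‖xₖ‖ ‖yₖ‖ < ∞`. One may assume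
`A` self-adjoint; in a Hilbert basis adapted to `ker A⁻ ⊕ (ker A⁻)ᗮ` the diagonal of `A⁺` is
dominated by that of `A`, so `√A⁺` is Hilbert–Schmidt and `A⁺ = √A⁺ √A⁺` is nuclear. Nuclearity of
`A` gives `tr (B A) = tr (A B)` for all bounded `B`.

`S` and `T` themselves need not be nuclear, so this does not apply to the two factors of `S T`. Put
`N = 1 - t T†T` and `M = 1 - t T T†`, contractions for small `t > 0` with `T Nᵏ = Mᵏ T`. Since
`tr (Nᵏ T†T S T) = tr (Mᵏ T T† T S)`, by cyclicity for the nuclear operator `Nᵏ T† (T S)`, the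
difference `tr (Nᵏ S T) - tr (Mᵏ T S)` does not depend on `k`. By the mean ergodic theorem its
Cesàro means converge to `tr (P S T) - tr (Q T S)`, where `P` and `Q` are the orthogonal
projections onto `ker T` and `ker T†`; this vanishes because `tr (P S T) = tr (S T P)`, `T P = 0`
and `Q T = 0`.
-/

open Filter Topology ContinuousLinearMap
open scoped InnerProduct ComplexStarModule ComplexConjugate

section Nuclear

variable {𝕜 E F G ι κ : Type*} [RCLike 𝕜]
  [NormedAddCommGroup E] [InnerProductSpace 𝕜 E]
  [NormedAddCommGroup F] [InnerProductSpace 𝕜 F]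
  [NormedAddCommGroup G] [InnerProductSpace 𝕜 G]

/-- The operator `A` is the sum of the rank one operators `|y k⟩⟨x k|`, absolutely convergent in
the sense that `∑ k, ‖x k‖ * ‖y k‖` is finite. -/
structure IsNuclearExpansion (A : E →L[𝕜] F) (x : κ → E) (y : κ → F) : Prop where
  summable_norm_mul_norm : Summable fun k => ‖x k‖ * ‖y k‖
  hasSum_apply (v : E) : HasSum (fun k => ⟪x k, v⟫_𝕜 • y k) (A v)

/-- Nuclear operators: those with a nuclear expansion. Only countably many terms of such an
expansion are nonzero, so index types in `Type` suffice. -/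
def IsNuclear (A : E →L[𝕜] F) : Prop :=
  ∃ (κ : Type) (x : κ → E) (y : κ → F), IsNuclearExpansion A x y

/-- The trace of `A` computed in the Hilbert basis `b`, with value `0` if the diagonal of `A` is
not summable. -/
noncomputable def basisTrace (b : HilbertBasis ι 𝕜 E) (A : E →L[𝕜] E) : 𝕜 :=
  ∑' i, ⟪b i, A (b i)⟫_𝕜

namespace IsNuclearExpansion

variable {A : E →L[𝕜] F} {x : κ → E} {y : κ → F}

lemma comp_left (h : IsNuclearExpansion A x y) (B : F →L[𝕜] G) :
    IsNuclearExpansion (B ∘L A) x (fun k => B (y k)) where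
  summable_norm_mul_norm := by
    refine .of_nonneg_of_le (fun k => by positivity) (fun k => ?_)
      (h.summable_norm_mul_norm.mul_left ‖B‖)
    calc ‖x k‖ * ‖B (y k)‖ ≤ ‖x k‖ * (‖B‖ * ‖y k‖) := by gcongr; exact B.le_opNorm _
      _ = ‖B‖ * (‖x k‖ * ‖y k‖) := by ring
  hasSum_apply v := by simpa using (h.hasSum_apply v).mapL B

lemma comp_right [CompleteSpace E] [CompleteSpace G]
    (h : IsNuclearExpansion A x y) (B : G →L[𝕜] E) :
    IsNuclearExpansion (A ∘L B) (fun k => (B†) (x k)) y where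
  summable_norm_mul_norm := by
    refine .of_nonneg_of_le (fun k => by positivity) (fun k => ?_)
      (h.summable_norm_mul_norm.mul_left ‖B†‖)
    calc ‖(B†) (x k)‖ * ‖y k‖ ≤ ‖B†‖ * ‖x k‖ * ‖y k‖ := by gcongr; exact (B†).le_opNorm _
      _ = ‖B†‖ * (‖x k‖ * ‖y k‖) := by ring
  hasSum_apply v := by simpa [adjoint_inner_left] using h.hasSum_apply (B v)

lemma add {μ : Type*} {B : E →L[𝕜] F} {u : μ → E} {v : μ → F}
    (hA : IsNuclearExpansion A x y) (hB : IsNuclearExpansion B u v) :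
    IsNuclearExpansion (A + B) (Sum.elim x u) (Sum.elim y v) where
  summable_norm_mul_norm :=
    (HasSum.sum (f := fun k => ‖Sum.elim x u k‖ * ‖Sum.elim y v k‖)
      hA.summable_norm_mul_norm.hasSum hB.summable_norm_mul_norm.hasSum).summable
  hasSum_apply w :=
    .sum (f := fun k => ⟪Sum.elim x u k, w⟫_𝕜 • Sum.elim y v k)
      (hA.hasSum_apply w) (hB.hasSum_apply w)

end IsNuclearExpansion

lemma sum_norm_inner_mul_inner_le {v : ι → E} (hv : Orthonormal 𝕜 v) (x y : E)
    (s : Finset ι) : ∑ i ∈ s, ‖⟪x, v i⟫_𝕜 * ⟪v i, y⟫_𝕜‖ ≤ ‖x‖ * ‖y‖ := by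
  calc ∑ i ∈ s, ‖⟪x, v i⟫_𝕜 * ⟪v i, y⟫_𝕜‖
      = ∑ i ∈ s, ‖⟪v i, x⟫_𝕜‖ * ‖⟪v i, y⟫_𝕜‖ := by simp only [norm_mul, norm_inner_symm x]
    _ ≤ √(∑ i ∈ s, ‖⟪v i, x⟫_𝕜‖ ^ 2) * √(∑ i ∈ s, ‖⟪v i, y⟫_𝕜‖ ^ 2) :=
      Real.sum_mul_le_sqrt_mul_sqrt ..
    _ ≤ √(‖x‖ ^ 2) * √(‖y‖ ^ 2) := by
      gcongr <;> exact hv.sum_inner_products_le _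
    _ = ‖x‖ * ‖y‖ := by simp only [Real.sqrt_sq (norm_nonneg _)]

lemma IsNuclearExpansion.hasSum_diagonal {A : E →L[𝕜] E} {x y : κ → E}
    (h : IsNuclearExpansion A x y) (b : HilbertBasis ι 𝕜 E) :
    HasSum (fun i => ⟪b i, A (b i)⟫_𝕜) (∑' k, ⟪x k, y k⟫_𝕜) := by
  have hbound := fun k => sum_norm_inner_mul_inner_le b.orthonormal (x k) (y k)
  have hsum : Summable fun p : κ × ι => ⟪x p.1, b p.2⟫_𝕜 * ⟪b p.2, y p.1⟫_𝕜 := by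
    refine .of_norm ((summable_prod_of_nonneg fun p => norm_nonneg _).2
      ⟨fun k => summable_of_sum_le (fun i => norm_nonneg _) (hbound k), ?_⟩)
    exact .of_nonneg_of_le (fun k => tsum_nonneg fun i => norm_nonneg _)
      (fun k => Real.tsum_le_of_sum_le (fun i => norm_nonneg _) (hbound k))
      h.summable_norm_mul_norm
  have hrow (k : κ) := b.hasSum_inner_mul_inner (x k) (y k)
  have hcol (i : ι) : HasSum (fun k => ⟪x k, b i⟫_𝕜 * ⟪b i, y k⟫_𝕜) ⟪b i, A (b i)⟫_𝕜 := by
    simpa [inner_smul_right] using (h.hasSum_apply (b i)).mapL (innerSL 𝕜 (b i))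
  have htotal := (hsum.hasSum.prod_fiberwise hrow).tsum_eq ▸ hsum.hasSum
  exact ((Equiv.prodComm ι κ).hasSum_iff.2 htotal).prod_fiberwise hcol

lemma IsNuclearExpansion.hasSum_inner {A : E →L[𝕜] E} {x y : κ → E}
    (h : IsNuclearExpansion A x y) (b : HilbertBasis ι 𝕜 E) :
    HasSum (fun k => ⟪x k, y k⟫_𝕜) (basisTrace b A) := by
  rw [basisTrace, (h.hasSum_diagonal b).tsum_eq]
  exact (Summable.of_norm_bounded h.summable_norm_mul_norm fun k => norm_inner_le_norm _ _).hasSum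

namespace IsNuclear

variable {A : E →L[𝕜] F}

lemma comp_left (hA : IsNuclear A) (B : F →L[𝕜] G) : IsNuclear (B ∘L A) :=
  let ⟨_, _, _, h⟩ := hA
  ⟨_, _, _, h.comp_left B⟩

lemma smul (hA : IsNuclear A) (a : 𝕜) : IsNuclear (a • A) := by
  simpa using hA.comp_left (a • ContinuousLinearMap.id 𝕜 F)

lemma add {B : E →L[𝕜] F} (hA : IsNuclear A) (hB : IsNuclear B) : IsNuclear (A + B) :=
  let ⟨_, _, _, hx⟩ := hA
  let ⟨_, _, _, hu⟩ := hB
  ⟨_, _, _, hx.add hu⟩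

lemma summable_diagonal {A : E →L[𝕜] E} (hA : IsNuclear A) (b : HilbertBasis ι 𝕜 E) :
    Summable fun i => ⟪b i, A (b i)⟫_𝕜 :=
  let ⟨_, _, _, h⟩ := hA
  (h.hasSum_diagonal b).summable

lemma basisTrace_sub {A B : E →L[𝕜] E} (hA : IsNuclear A) (hB : IsNuclear B)
    (b : HilbertBasis ι 𝕜 E) : basisTrace b (A - B) = basisTrace b A - basisTrace b B := by
  simp only [basisTrace, sub_apply, inner_sub_right]
  exact (hA.summable_diagonal b).tsum_sub (hB.summable_diagonal b)

lemma basisTrace_comp_comm [CompleteSpace E] [CompleteSpace F] (hA : IsNuclear A)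
    (B : F →L[𝕜] E) (b : HilbertBasis ι 𝕜 E) (c : HilbertBasis κ 𝕜 F) :
    basisTrace b (B ∘L A) = basisTrace c (A ∘L B) := by
  obtain ⟨_, x, y, h⟩ := hA
  refine ((h.comp_left B).hasSum_inner b).unique ?_
  simpa only [adjoint_inner_left] using (h.comp_right B).hasSum_inner c

end IsNuclear

lemma basisTrace_smul (b : HilbertBasis ι 𝕜 E) (a : 𝕜) (A : E →L[𝕜] E) :
    basisTrace b (a • A) = a * basisTrace b A := by
  simp only [basisTrace, smul_apply, inner_smul_right, tsum_mul_left]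

lemma norm_birkhoffAverage_le {N : E →L[𝕜] E} (hN : ‖N‖ ≤ 1) (n : ℕ) (x : E) :
    ‖birkhoffAverage 𝕜 N id n x‖ ≤ ‖x‖ := by
  have hiter (k : ℕ) : ‖N^[k] x‖ ≤ ‖x‖ := by
    have hLip : LipschitzWith 1 N := N.lipschitz.weaken hN
    simpa using (hLip.iterate k).dist_le_mul x 0
  rcases n.eq_zero_or_pos with rfl | hn
  · simp
  calc ‖birkhoffAverage 𝕜 N id n x‖ = (n : ℝ)⁻¹ * ‖∑ k ∈ Finset.range n, N^[k] x‖ := by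
        simp [birkhoffAverage, birkhoffSum, norm_smul]
    _ ≤ (n : ℝ)⁻¹ * (n * ‖x‖) := by
        gcongr
        simpa using norm_sum_le_of_le (Finset.range n) fun k _ => hiter k
    _ = ‖x‖ := by field_simp

lemma IsNuclear.tendsto_average_basisTrace [CompleteSpace E] {A N : E →L[𝕜] E} (hA : IsNuclear A)
    (hN : ‖N‖ ≤ 1) (b : HilbertBasis ι 𝕜 E) :
    Tendsto (fun n : ℕ => (n : 𝕜)⁻¹ * ∑ k ∈ Finset.range n, basisTrace b ((N ^ k) ∘L A)) atTop
      (𝓝 (basisTrace b ((N.eqLocus (1 : E →L[𝕜] E)).starProjection ∘L A))) := by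
  obtain ⟨_, x, y, h⟩ := hA
  have htrace (B : E →L[𝕜] E) := (h.comp_left B).hasSum_inner b
  have haverage (n : ℕ) : ∑' j, ⟪x j, birkhoffAverage 𝕜 N id n (y j)⟫_𝕜 =
      (n : 𝕜)⁻¹ * ∑ k ∈ Finset.range n, basisTrace b ((N ^ k) ∘L A) := by
    simpa [birkhoffAverage, birkhoffSum, inner_smul_right, inner_sum] using
      ((hasSum_sum fun k (_ : k ∈ Finset.range n) => htrace (N ^ k)).mul_left (n : 𝕜)⁻¹).tsum_eq
  have hlim : Tendsto (fun n => ∑' j, ⟪x j, birkhoffAverage 𝕜 N id n (y j)⟫_𝕜) atTop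
      (𝓝 (∑' j, ⟪x j, (N.eqLocus (1 : E →L[𝕜] E)).starProjection (y j)⟫_𝕜)) := by
    refine tendsto_tsum_of_dominated_convergence h.summable_norm_mul_norm
      (fun j => tendsto_const_nhds.inner (N.tendsto_birkhoffAverage_orthogonalProjection hN (y j)))
      (.of_forall fun n j => ?_)
    grw [norm_inner_le_norm, norm_birkhoffAverage_le hN]
  simpa only [haverage, (htrace _).tsum_eq] using hlim

end Nuclear

section Landweber

variable {𝕜 E F : Type*} [RCLike 𝕜]
  [NormedAddCommGroup E] [InnerProductSpace 𝕜 E] [CompleteSpace E]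
  [NormedAddCommGroup F] [InnerProductSpace 𝕜 F] [CompleteSpace F]

/-- The Landweber iteration operator `1 - t T†T` of `T` with step size `t`. For small `t > 0`
it is a contraction whose fixed points form the kernel of `T`, and its powers intertwine with those
of `landweber t (T†)` along `T`. -/
noncomputable def landweber (t : ℝ) (T : E →L[𝕜] F) : E →L[𝕜] E :=
  1 - (t : 𝕜) • (T† ∘L T)

lemma comp_landweber (t : ℝ) (T : E →L[𝕜] F) :
    T ∘L landweber t T = landweber t (T†) ∘L T := by
  ext; simp [landweber]

lemma comp_landweber_pow (t : ℝ) (T : E →L[𝕜] F) (k : ℕ) :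
    T ∘L (landweber t T ^ k) = (landweber t (T†) ^ k) ∘L T := by
  induction k with
  | zero => rfl
  | succ k ih =>
    rw [pow_succ, pow_succ, mul_def, mul_def, ← comp_assoc, ih, comp_assoc, comp_landweber,
      comp_assoc]

lemma norm_landweber_le_one {t : ℝ} (ht : 0 ≤ t) {T : E →L[𝕜] F} (hT : t * ‖T‖ ^ 2 ≤ 1) :
    ‖landweber t T‖ ≤ 1 := by
  refine opNorm_le_bound _ zero_le_one fun x => ?_
  rw [one_mul, ← sq_le_sq₀ (norm_nonneg _) (norm_nonneg _)]
  have hadj : ‖(T†) (T x)‖ ^ 2 ≤ ‖T‖ ^ 2 * ‖T x‖ ^ 2 := by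
    rw [← mul_pow, ← LinearIsometryEquiv.norm_map adjoint T]
    gcongr
    exact le_opNorm _ _
  calc ‖landweber t T x‖ ^ 2
      = ‖x‖ ^ 2 - 2 * t * ‖T x‖ ^ 2 + t ^ 2 * ‖(T†) (T x)‖ ^ 2 := by
        rw [landweber, sub_apply, one_apply_eq_self, smul_apply, comp_apply, norm_sub_sq (𝕜 := 𝕜),
          inner_smul_right, adjoint_inner_right, inner_self_eq_norm_sq_to_K, norm_smul,
          RCLike.norm_ofReal, mul_pow, sq_abs]
        norm_cast
        ring
    _ ≤ ‖x‖ ^ 2 - 2 * t * ‖T x‖ ^ 2 + t ^ 2 * (‖T‖ ^ 2 * ‖T x‖ ^ 2) := by gcongr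
    _ = ‖x‖ ^ 2 - t * ‖T x‖ ^ 2 * (1 + (1 - t * ‖T‖ ^ 2)) := by ring
    _ ≤ ‖x‖ ^ 2 := sub_le_self _ (by have := sub_nonneg.2 hT; positivity)

lemma eqLocus_landweber {t : ℝ} (ht : t ≠ 0) (T : E →L[𝕜] F) :
    (landweber t T).eqLocus (1 : E →L[𝕜] E) = T.ker := by
  rw [← ker_adjoint_comp_self]
  ext x
  simp [landweber, ht]

lemma comp_starProjection_eqLocus_landweber {t : ℝ} (ht : t ≠ 0) (T : E →L[𝕜] F) :
    T ∘L ((landweber t T).eqLocus (1 : E →L[𝕜] E)).starProjection = 0 := by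
  ext x
  exact (eqLocus_landweber ht T).le (Submodule.starProjection_apply_mem _ x)

lemma starProjection_eqLocus_landweber_comp {t : ℝ} (ht : t ≠ 0) (T : E →L[𝕜] F) :
    ((landweber t (T†)).eqLocus (1 : F →L[𝕜] F)).starProjection ∘L T = 0 := by
  rw [← adjoint_adjoint (_ ∘L T), adjoint_comp, (isSelfAdjoint_starProjection _).adjoint_eq,
    comp_starProjection_eqLocus_landweber ht, map_zero]

variable {ι κ : Type*} {S : F →L[𝕜] E} {T : E →L[𝕜] F}

lemma IsNuclear.basisTrace_landweber_pow_succ_comp {A : E →L[𝕜] E} (hA : IsNuclear A)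
    (b : HilbertBasis ι 𝕜 E) (t : ℝ) (T : E →L[𝕜] F) (k : ℕ) :
    basisTrace b ((landweber t T ^ (k + 1)) ∘L A) =
      basisTrace b ((landweber t T ^ k) ∘L A) -
        t * basisTrace b ((landweber t T ^ k) ∘L T† ∘L T ∘L A) := by
  have hstep : landweber t T ∘L A = A - (t : 𝕜) • (T† ∘L T ∘L A) := by
    ext; simp [landweber]
  rw [pow_succ, mul_def, comp_assoc, hstep, comp_sub, comp_smul,
    (hA.comp_left _).basisTrace_sub ((((hA.comp_left T).comp_left _).comp_left _).smul _),
    basisTrace_smul]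

lemma basisTrace_landweber_pow_comp_sub (hST : IsNuclear (S ∘L T)) (hTS : IsNuclear (T ∘L S))
    (b : HilbertBasis ι 𝕜 E) (c : HilbertBasis κ 𝕜 F) (t : ℝ) (k : ℕ) :
    basisTrace b ((landweber t T ^ k) ∘L S ∘L T) -
        basisTrace c ((landweber t (T†) ^ k) ∘L T ∘L S) =
      basisTrace b (S ∘L T) - basisTrace c (T ∘L S) := by
  induction k with
  | zero => rfl
  | succ k ih =>
    have hcyclic : basisTrace b ((landweber t T ^ k) ∘L T† ∘L T ∘L S ∘L T) =
        basisTrace c ((landweber t (T†) ^ k) ∘L T ∘L T† ∘L T ∘L S) := by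
      have hcomm := ((hTS.comp_left (T†)).comp_left (landweber t T ^ k)).basisTrace_comp_comm T c b
      rw [← comp_assoc T, comp_landweber_pow] at hcomm
      exact hcomm.symm
    rw [hST.basisTrace_landweber_pow_succ_comp, hTS.basisTrace_landweber_pow_succ_comp,
      adjoint_adjoint, hcyclic, sub_sub_sub_cancel_right, ih]

theorem basisTrace_comp_comm_of_isNuclear_comp (hST : IsNuclear (S ∘L T))
    (hTS : IsNuclear (T ∘L S)) (b : HilbertBasis ι 𝕜 E) (c : HilbertBasis κ 𝕜 F) :
    basisTrace b (S ∘L T) = basisTrace c (T ∘L S) := by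
  obtain ⟨t, ht, htT⟩ : ∃ t : ℝ, 0 < t ∧ t * ‖T‖ ^ 2 ≤ 1 :=
    ⟨(1 + ‖T‖ ^ 2)⁻¹, by positivity, inv_mul_le_one_of_le₀ (by simp) (by positivity)⟩
  have htT' : t * ‖T†‖ ^ 2 ≤ 1 := by rwa [LinearIsometryEquiv.norm_map]
  have hlimE := hST.tendsto_average_basisTrace (norm_landweber_le_one ht.le htT) b
  have hlimF := hTS.tendsto_average_basisTrace (norm_landweber_le_one ht.le htT') c
  rw [hST.basisTrace_comp_comm _ b b, comp_assoc,
    comp_starProjection_eqLocus_landweber ht.ne', comp_zero] at hlimE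
  rw [← comp_assoc, starProjection_eqLocus_landweber_comp ht.ne', zero_comp] at hlimF
  have hzero := hlimE.sub hlimF
  simp only [← mul_sub, ← Finset.sum_sub_distrib, basisTrace_landweber_pow_comp_sub hST hTS,
    Finset.sum_const, Finset.card_range, nsmul_eq_mul] at hzero
  have hconst : (fun n : ℕ => (n : 𝕜)⁻¹ * (n * (basisTrace b (S ∘L T) - basisTrace c (T ∘L S))))
      =ᶠ[atTop] fun _ => basisTrace b (S ∘L T) - basisTrace c (T ∘L S) := by
    filter_upwards [eventually_ne_atTop 0] with n hn
    rw [inv_mul_cancel_left₀ (by exact_mod_cast hn)]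
  have hdiff := tendsto_nhds_unique (tendsto_const_nhds.congr' hconst.symm) hzero
  simpa [basisTrace, sub_eq_zero] using hdiff

end Landweber

section TraceClass

lemma exists_hilbertBasis_mem_or_mem_orthogonal {𝕜 E : Type*} [RCLike 𝕜] [NormedAddCommGroup E]
    [InnerProductSpace 𝕜 E] [CompleteSpace E] (K : Submodule 𝕜 E) [CompleteSpace K] :
    ∃ (w : Set E) (b : HilbertBasis w 𝕜 E), ∀ i, b i ∈ K ∨ b i ∈ Kᗮ := by
  obtain ⟨v, c, -⟩ := exists_hilbertBasis 𝕜 K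
  have hc : Orthonormal 𝕜 fun j => (c j : E) := c.orthonormal.comp_linearIsometry K.subtypeₗᵢ
  obtain ⟨w, b, hw, hb⟩ := hc.toSubtypeRange.exists_hilbertBasis_extension
  refine ⟨w, b, fun i => ?_⟩
  by_cases hi : (i : E) ∈ Set.range fun j => (c j : E)
  · obtain ⟨j, hj⟩ := hi
    exact .inl (by rw [hb, ← hj]; exact (c j).2)
  · right
    rw [← Submodule.orthogonalProjectionOnto_eq_zero_iff, ← c.repr.map_eq_zero_iff]
    ext j
    have horth := b.orthonormal.2 (i := ⟨c j, hw ⟨j, rfl⟩⟩) (j := i)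
      fun h => hi ⟨j, congrArg Subtype.val h⟩
    simp only [hb] at horth ⊢
    simpa [c.repr_apply_apply] using horth

lemma isNuclear_comp_adjoint_of_summable {𝕜 E F : Type*} {ι : Type} [RCLike 𝕜]
    [NormedAddCommGroup E] [InnerProductSpace 𝕜 E] [CompleteSpace E]
    [NormedAddCommGroup F] [InnerProductSpace 𝕜 F] [CompleteSpace F] {G : E →L[𝕜] F}
    {b : HilbertBasis ι 𝕜 E} (hG : Summable fun i => ‖G (b i)‖ ^ 2) : IsNuclear (G ∘L G†) := by
  refine ⟨ι, fun i => G (b i), fun i => G (b i), by simpa only [sq] using hG, fun v => ?_⟩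
  simpa [b.repr_apply_apply, adjoint_inner_right] using (b.hasSum_repr ((G†) v)).mapL G

variable {H : Type*} [NormedAddCommGroup H] [InnerProductSpace ℂ H]

lemma IsTraceClass.smul {A : H →L[ℂ] H} (hA : IsTraceClass A) (c : ℂ) : IsTraceClass (c • A) :=
  fun ι b => by simpa [inner_smul_left] using (hA ι b).mul_right ‖c‖

lemma IsTraceClass.realPart [CompleteSpace H] {A : H →L[ℂ] H} (hA : IsTraceClass A) :
    IsTraceClass (ℜ A : H →L[ℂ] H) := by
  refine fun ι b => .of_nonneg_of_le (fun i => norm_nonneg _) (fun i => ?_) (hA ι b)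
  have hre : ⟪(ℜ A : H →L[ℂ] H) (b i), b i⟫_ℂ = (⟪A (b i), b i⟫_ℂ).re := by
    rw [realPart_apply_coe, smul_apply, add_apply, star_eq_adjoint, inner_smul_left_eq_smul,
      inner_add_left, adjoint_inner_left, ← inner_conj_symm (b i), Complex.add_conj]
    simp
  rw [hre, Complex.norm_real]
  exact Complex.abs_re_le_norm _

lemma norm_inner_posPart_le {A : H →L[ℂ] H} [CompleteSpace H] (hA : IsSelfAdjoint A) {x : H}
    (hx : x ∈ (A⁻).ker ∨ x ∈ (A⁻).kerᗮ) : ‖⟪A⁺ x, x⟫_ℂ‖ ≤ ‖⟪A x, x⟫_ℂ‖ := by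
  rcases hx with hx | hx
  · have hAx : A x = A⁺ x := by
      conv_lhs => rw [← CFC.posPart_sub_negPart A hA, sub_apply, show A⁻ x = 0 from hx, sub_zero]
    rw [hAx]
  · have hmem : A⁺ x ∈ (A⁻).ker := DFunLike.congr_fun (CFC.negPart_mul_posPart A) x
    simp [hx _ hmem]

end TraceClass

section TraceClassNuclear

variable {H : Type} [NormedAddCommGroup H] [InnerProductSpace ℂ H] [CompleteSpace H]

lemma IsTraceClass.isNuclear_posPart {A : H →L[ℂ] H} (hA : IsTraceClass A)
    (hsa : IsSelfAdjoint A) : IsNuclear A⁺ := by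
  set G := CFC.sqrt A⁺
  have hG : G† = G := (CFC.sqrt_nonneg A⁺).isSelfAdjoint
  have hGG : A⁺ = G ∘L G† := by rw [hG]; exact (CFC.sqrt_mul_sqrt_self A⁺).symm
  obtain ⟨w, b, hb⟩ := exists_hilbertBasis_mem_or_mem_orthogonal (A⁻).ker
  rw [hGG]
  refine isNuclear_comp_adjoint_of_summable (b := b)
    (.of_nonneg_of_le (fun i => sq_nonneg _) (fun i => ?_) (hA w b))
  calc ‖G (b i)‖ ^ 2 = ‖⟪A⁺ (b i), b i⟫_ℂ‖ := by
        rw [hGG, comp_apply, ← adjoint_inner_right, hG, inner_self_eq_norm_sq_to_K]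
        simp
    _ ≤ ‖⟪A (b i), b i⟫_ℂ‖ := norm_inner_posPart_le hsa (hb i)

lemma IsTraceClass.isNuclear_of_isSelfAdjoint {A : H →L[ℂ] H} (hA : IsTraceClass A)
    (hsa : IsSelfAdjoint A) : IsNuclear A := by
  have hneg : IsNuclear A⁻ := by
    rw [← CFC.posPart_neg]
    exact IsTraceClass.isNuclear_posPart (by simpa using hA.smul (-1)) hsa.neg
  rw [← CFC.posPart_sub_negPart A hsa, sub_eq_add_neg, ← neg_one_smul ℂ]
  exact (hA.isNuclear_posPart hsa).add (hneg.smul _)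

theorem IsTraceClass.isNuclear {A : H →L[ℂ] H} (hA : IsTraceClass A) : IsNuclear A := by
  have him : (ℑ A : H →L[ℂ] H) = ℜ ((-Complex.I) • A) := by
    rw [neg_smul, map_neg, realPart_I_smul, neg_neg]
  rw [← realPart_add_I_smul_imaginaryPart A, him]
  exact (hA.realPart.isNuclear_of_isSelfAdjoint (ℜ A).2).add
    (((hA.smul _).realPart.isNuclear_of_isSelfAdjoint (ℜ _).2).smul _)

end TraceClassNuclear

lemma tsum_inner_apply_eq_conj_basisTrace {𝕜 E ι : Type*} [RCLike 𝕜] [NormedAddCommGroup E]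
    [InnerProductSpace 𝕜 E] (b : HilbertBasis ι 𝕜 E) (A : E →L[𝕜] E) :
    ∑' i, ⟪A (b i), b i⟫_𝕜 = conj (basisTrace b A) := by
  simp only [basisTrace, RCLike.conj_tsum, inner_conj_symm]

theorem trace_comm_vanishes_general {H K : Type}
    [NormedAddCommGroup H] [InnerProductSpace ℂ H] [CompleteSpace H]
    [NormedAddCommGroup K] [InnerProductSpace ℂ K] [CompleteSpace K]
    (S : K →L[ℂ] H) (T : H →L[ℂ] K)
    (hST : IsTraceClass (S ∘L T)) (hTS : IsTraceClass (T ∘L S))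
    {ι κ : Type*} (b : HilbertBasis ι ℂ H) (c : HilbertBasis κ ℂ K) :
    ∑' i, ⟪(S ∘L T) (b i), b i⟫_ℂ = ∑' j, ⟪(T ∘L S) (c j), c j⟫_ℂ := by
  rw [tsum_inner_apply_eq_conj_basisTrace, tsum_inner_apply_eq_conj_basisTrace,
    basisTrace_comp_comm_of_isNuclear_comp hST.isNuclear hTS.isNuclear b c]

/-- If ST and TS are trace class, then Tr(ST) = Tr(TS); in particular the
trace of the commutator [S,T] vanishes. -/
theorem trace_comm_vanishes {H : Type} [NormedAddCommGroup H]
    [InnerProductSpace ℂ H] [CompleteSpace H]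
    (S T : H →L[ℂ] H)
    (hST : IsTraceClass (S ∘L T)) (hTS : IsTraceClass (T ∘L S))
    (ι : Type) (b : HilbertBasis ι ℂ H) :
    (∑' i, ⟪(S ∘L T) (b i), b i⟫_ℂ) = ∑' i, ⟪(T ∘L S) (b i), b i⟫_ℂ ∧
    (∑' i, ⟪(S ∘L T - T ∘L S) (b i), b i⟫_ℂ) = 0 := by
  have htrace := trace_comm_vanishes_general S T hST hTS b b
  refine ⟨htrace, ?_⟩
  simp only [sub_apply, inner_sub_left]
  rw [(hST ι b).of_norm.tsum_sub (hTS ι b).of_norm, htrace, sub_self]
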